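/- Let α > 0, B > 0, h > 0 and N₀ > 0 be real constants. The set {(l, E, t) ∈ ℝ³ : l ≥ 0, E ≥ 0, t > 0, α·l ≤ t · B · ln(1 + (E/t) · h / (N₀·B))} is a convex subset of ℝ³. -/

import Mathlib

/-!
The perspective `(x, t) ↦ t • f (t⁻¹ • x)` of a concave function `f` is concave on `t > 0`: the
point attached to `a • (x, t) + b • (y, u)` is the average of `t⁻¹ • x` and `u⁻¹ • y` with weights
proportional to `a * t` and `b * u`. The rate constraint `α l ≤ t r(E/t)` cuts out the preimage,
under the linear map `(l, E, t) ↦ ((E, t), α l)`, of the hypograph of the perspective of the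
concave rate function `r`.
-/

open Set

section Perspective

variable {𝕜 E β : Type*} [Field 𝕜] [AddCommMonoid E] [Module 𝕜 E]

/-- The perspective `(x, t) ↦ t • f (x / t)` of a function `f`, with `x / t` encoded as
`t⁻¹ • x`; at `t = 0` it takes the junk value `0 • f 0`. -/
def perspective [SMul 𝕜 β] (f : E → β) (p : E × 𝕜) : β :=
  p.2 • f (p.2⁻¹ • p.1)

lemma inv_add_smul_add_smul {a b t u : 𝕜} (ht : t ≠ 0) (hu : u ≠ 0) (x y : E) :
    (a * t + b * u)⁻¹ • (a • x + b • y) =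
      (a * t / (a * t + b * u)) • t⁻¹ • x + (b * u / (a * t + b * u)) • u⁻¹ • y := by
  simp only [smul_add, smul_smul]
  congr 2 <;> field_simp

variable [LinearOrder 𝕜] [IsStrictOrderedRing 𝕜]

lemma convex_setOf_pos_and_inv_smul_mem {s : Set E} (hs : Convex 𝕜 s) :
    Convex 𝕜 {p : E × 𝕜 | 0 < p.2 ∧ p.2⁻¹ • p.1 ∈ s} := by
  rw [convex_iff_forall_pos]
  rintro ⟨x, t⟩ ⟨ht, hx⟩ ⟨y, u⟩ ⟨hu, hy⟩ a b ha hb -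
  dsimp only at ht hx hu hy
  have hT : 0 < a * t + b * u := by positivity
  refine ⟨hT, show (a * t + b * u)⁻¹ • (a • x + b • y) ∈ s from ?_⟩
  rw [inv_add_smul_add_smul ht.ne' hu.ne']
  exact hs hx hy (by positivity) (by positivity) (by field_simp)

lemma concaveOn_perspective [AddCommMonoid β] [PartialOrder β] [Module 𝕜 β] [PosSMulMono 𝕜 β]
    {s : Set E} {f : E → β} (hf : ConcaveOn 𝕜 s f) :
    ConcaveOn 𝕜 {p : E × 𝕜 | 0 < p.2 ∧ p.2⁻¹ • p.1 ∈ s} (perspective f) := by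
  refine concaveOn_iff_forall_pos.2 ⟨convex_setOf_pos_and_inv_smul_mem hf.1, ?_⟩
  rintro ⟨x, t⟩ ⟨ht, hx⟩ ⟨y, u⟩ ⟨hu, hy⟩ a b ha hb -
  dsimp only at ht hx hu hy
  have hT : 0 < a * t + b * u := by positivity
  calc a • t • f (t⁻¹ • x) + b • u • f (u⁻¹ • y)
      = (a * t + b * u) • ((a * t / (a * t + b * u)) • f (t⁻¹ • x) +
          (b * u / (a * t + b * u)) • f (u⁻¹ • y)) := by
        simp only [smul_add, smul_smul, mul_div_cancel₀ _ hT.ne']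
    _ ≤ (a * t + b * u) • f ((a * t / (a * t + b * u)) • t⁻¹ • x +
          (b * u / (a * t + b * u)) • u⁻¹ • y) := by
        gcongr
        exact hf.2 hx hy (by positivity) (by positivity) (by field_simp)
    _ = (a * t + b * u) • f ((a * t + b * u)⁻¹ • (a • x + b • y)) := by
        rw [inv_add_smul_add_smul ht.ne' hu.ne']

end Perspective

lemma concaveOn_log_one_add_mul (c : ℝ) :
    ConcaveOn ℝ {x | 0 < 1 + c * x} fun x ↦ Real.log (1 + c * x) := by
  have h := strictConcaveOn_log_Ioi.concaveOn.comp_affineMap (AffineMap.lineMap (1 : ℝ) (1 + c))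
  simpa [AffineMap.lineMap_apply, preimage, Function.comp_def, add_comm, mul_comm] using h

/-- The uplink rate `r(p) = B ln (1 + p h / (N₀ B))` at transmit power `p`. -/
noncomputable def uplinkRate (B h N₀ p : ℝ) : ℝ :=
  B * Real.log (1 + p * h / (N₀ * B))

lemma concaveOn_uplinkRate {B h N₀ : ℝ} (hB : 0 < B) (hh : 0 ≤ h) (hN₀ : 0 < N₀) :
    ConcaveOn ℝ (Ici 0) (uplinkRate B h N₀) := by
  have hpos : Ici 0 ⊆ {p | 0 < 1 + h / (N₀ * B) * p} := by
    intro p (hp : 0 ≤ p)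
    rw [mem_ofPred_eq]
    positivity
  have heq : uplinkRate B h N₀ = fun p ↦ B • Real.log (1 + h / (N₀ * B) * p) := by
    ext p
    rw [uplinkRate, smul_eq_mul, mul_comm p, mul_div_right_comm]
  rw [heq]
  exact ((concaveOn_log_one_add_mul _).subset hpos (convex_Ici 0)).smul hB.le

theorem shuffle_constraint_convex_general (α : ℝ) {r : ℝ → ℝ} (hr : ConcaveOn ℝ (Ici 0) r) :
    Convex ℝ {p : ℝ × ℝ × ℝ | 0 ≤ p.1 ∧ 0 ≤ p.2.1 ∧ 0 < p.2.2 ∧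
      α * p.1 ≤ p.2.2 * r (p.2.1 / p.2.2)} := by
  let L : ℝ × ℝ × ℝ →ₗ[ℝ] (ℝ × ℝ) × ℝ :=
    (LinearMap.snd ℝ ℝ (ℝ × ℝ)).prod (α • LinearMap.fst ℝ ℝ (ℝ × ℝ))
  have hload : Convex ℝ {p : ℝ × ℝ × ℝ | 0 ≤ p.1} :=
    (convex_Ici 0).linear_preimage (LinearMap.fst ℝ ℝ (ℝ × ℝ))
  have hrate := (concaveOn_perspective hr).convex_hypograph.linear_preimage L
  convert hload.inter hrate using 1
  ext ⟨l, E, t⟩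
  have hE (ht : 0 < t) : 0 ≤ t⁻¹ * E ↔ 0 ≤ E := mul_nonneg_iff_of_pos_left (inv_pos.2 ht)
  change (0 ≤ l ∧ 0 ≤ E ∧ 0 < t ∧ α * l ≤ t * r (E / t)) ↔
    0 ≤ l ∧ (0 < t ∧ 0 ≤ t⁻¹ * E) ∧ α * l ≤ t * r (t⁻¹ * E)
  rw [div_eq_inv_mul]
  tauto

/-- For constants `α > 0`, `B > 0`, `h > 0`, `N₀ > 0`, the set
`{(l, E, t) | 0 ≤ l, 0 ≤ E, 0 < t, α l ≤ t B ln (1 + (E/t) h/(N₀ B))}`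
is a convex subset of `ℝ³`. -/
theorem shuffle_constraint_convex (α B h N₀ : ℝ) (hα : 0 < α) (hB : 0 < B)
    (hh : 0 < h) (hN₀ : 0 < N₀) :
    Convex ℝ {p : ℝ × ℝ × ℝ | 0 ≤ p.1 ∧ 0 ≤ p.2.1 ∧ 0 < p.2.2 ∧
      α * p.1 ≤ p.2.2 * B * Real.log (1 + (p.2.1 / p.2.2) * h / (N₀ * B))} := by
  simpa only [uplinkRate, mul_assoc] using
    shuffle_constraint_convex_general α (concaveOn_uplinkRate hB hh.le hN₀)
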